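/- Let (h,x) ∈ 𝒩_d ∩ 𝒩_ε with 0 < ε ≤ 1/15. Then for every i = 1,…,s: max{‖Δh_i‖², ‖Δx_i‖²} ≤ (7.5·δ_i² + 4·δ_0²)·d_{i0} and ‖Δh_i‖²·‖Δx_i‖² ≤ (δ_i² + δ_0²)·d_{i0}²/26. If in addition (h,x) ∈ 𝒩_μ and μ ≥ μ_h, then √L·‖B(Δh_i)‖_∞ ≤ 6μ√d_{i0} for every i. -/

import Mathlib

noncomputable section
open Finset ComplexConjugate

namespace RGD

/-- Squared Euclidean norm of a complex vector. -/
def vnormSq {n : ℕ} (v : Fin n → ℂ) : ℝ := ∑ j, ‖v j‖ ^ 2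

/-- Euclidean norm of a complex vector. -/
def vnorm {n : ℕ} (v : Fin n → ℂ) : ℝ := Real.sqrt (vnormSq v)

/-- Inner product, conjugate-linear in the first argument. -/
def vinner {n : ℕ} (u v : Fin n → ℂ) : ℂ := ∑ j, conj (u j) * v j

/-- Squared Frobenius norm of a matrix. -/
def frobSq {K N : ℕ} (Z : Matrix (Fin K) (Fin N) ℂ) : ℝ := ∑ k, ∑ j, ‖Z k j‖ ^ 2

/-- Frobenius norm of a matrix. -/
def frob {K N : ℕ} (Z : Matrix (Fin K) (Fin N) ℂ) : ℝ := Real.sqrt (frobSq Z)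

/-- Frobenius inner product `⟨U,V⟩ = Tr(U*V)`, conjugate-linear in the first argument. -/
def finner {K N : ℕ} (U V : Matrix (Fin K) (Fin N) ℂ) : ℂ := ∑ k, ∑ j, conj (U k j) * V k j

/-- Spectral (operator) norm of a matrix: sup of `‖Zv‖` over the closed unit ball. -/
def opNorm {K N : ℕ} (Z : Matrix (Fin K) (Fin N) ℂ) : ℝ :=
  sSup {r : ℝ | ∃ v : Fin N → ℂ, vnorm v ≤ 1 ∧ r = vnorm (Z.mulVec v)}

/-- Squared Frobenius norm of a block-diagonal matrix, given by its diagonal blocks. -/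
def famFrobSq {K N s : ℕ} (Z : Fin s → Matrix (Fin K) (Fin N) ℂ) : ℝ := ∑ i, frobSq (Z i)

/-- Frobenius norm of a block-diagonal matrix, given by its diagonal blocks. -/
def famFrob {K N s : ℕ} (Z : Fin s → Matrix (Fin K) (Fin N) ℂ) : ℝ := Real.sqrt (famFrobSq Z)

/-- The rank-one matrix `u v*`. -/
def rankOne {K N : ℕ} (u : Fin K → ℂ) (v : Fin N → ℂ) : Matrix (Fin K) (Fin N) ℂ :=
  Matrix.of fun k j => u k * conj (v j)

/-- `ℋ(h,x)`: block-diagonal matrix with `i`-th block `hᵢ xᵢ*`. -/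
def Hmap {K N s : ℕ} (h : Fin s → Fin K → ℂ) (x : Fin s → Fin N → ℂ) :
    Fin s → Matrix (Fin K) (Fin N) ℂ := fun i => rankOne (h i) (x i)

/-- `𝒜ᵢ(Z) = (bₗ* Z aₗ)ₗ`. -/
def calAi {K N L : ℕ} (b : Fin L → Fin K → ℂ) (a : Fin L → Fin N → ℂ)
    (Z : Matrix (Fin K) (Fin N) ℂ) : Fin L → ℂ :=
  fun l => vinner (b l) (Z.mulVec (a l))

/-- `𝒜(Z) = Σᵢ 𝒜ᵢ(Zᵢ)` on block-diagonal matrices. -/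
def calA {K N L s : ℕ} (b : Fin L → Fin K → ℂ) (a : Fin s → Fin L → Fin N → ℂ)
    (Z : Fin s → Matrix (Fin K) (Fin N) ℂ) : Fin L → ℂ :=
  fun l => ∑ i, calAi b (a i) (Z i) l

/-- `𝒜ᵢ*(z) = Σₗ zₗ bₗ aₗ*`. -/
def calAdj {K N L : ℕ} (b : Fin L → Fin K → ℂ) (a : Fin L → Fin N → ℂ)
    (z : Fin L → ℂ) : Matrix (Fin K) (Fin N) ℂ :=
  Matrix.of fun k j => ∑ l, z l * b l k * conj (a l j)

/-- `‖𝒜*(e)‖ = maxᵢ ‖𝒜ᵢ*(e)‖` (operator norms). -/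
def AadjNorm {K N L s : ℕ} (b : Fin L → Fin K → ℂ) (a : Fin s → Fin L → Fin N → ℂ)
    (e : Fin L → ℂ) : ℝ :=
  ⨆ i : Fin s, opNorm (calAdj b (a i) e)

/-- `B*B = I_K`, expressed in terms of the columns `bₗ` of `B*`. -/
def BtBeqI {K L : ℕ} (b : Fin L → Fin K → ℂ) : Prop :=
  ∀ k k' : Fin K, (∑ l, b l k * conj (b l k')) = if k = k' then (1 : ℂ) else 0

/-- `μ ≥ μ_h`, i.e. `√L ‖B h_{i0}‖_∞ ≤ μ ‖h_{i0}‖` for all `i`. -/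
def muhLe {K L s : ℕ} (b : Fin L → Fin K → ℂ) (h0 : Fin s → Fin K → ℂ) (μ : ℝ) : Prop :=
  ∀ i l, Real.sqrt L * ‖vinner (b l) (h0 i)‖ ≤ μ * vnorm (h0 i)

/-- `d₀ = √(Σᵢ d_{i0}²)`. -/
def dtot {s : ℕ} (d0 : Fin s → ℝ) : ℝ := Real.sqrt (∑ i, d0 i ^ 2)

/-- Condition number `κ = (maxᵢ d_{i0}) / (minᵢ d_{i0})`. -/
def kappa {s : ℕ} (d0 : Fin s → ℝ) : ℝ := (⨆ i, d0 i) / (⨅ i, d0 i)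

/-- The observation `y = 𝒜(ℋ(h₀,x₀)) + e`. -/
def yvec {K N L s : ℕ} (b : Fin L → Fin K → ℂ) (a : Fin s → Fin L → Fin N → ℂ)
    (h0 : Fin s → Fin K → ℂ) (x0 : Fin s → Fin N → ℂ) (e : Fin L → ℂ) : Fin L → ℂ :=
  fun l => calA b a (Hmap h0 x0) l + e l

/-- `F(h,x) = ‖𝒜(ℋ(h,x)) − y‖²`. -/
def Fobj {K N L s : ℕ} (b : Fin L → Fin K → ℂ) (a : Fin s → Fin L → Fin N → ℂ)
    (h0 : Fin s → Fin K → ℂ) (x0 : Fin s → Fin N → ℂ) (e : Fin L → ℂ)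
    (h : Fin s → Fin K → ℂ) (x : Fin s → Fin N → ℂ) : ℝ :=
  vnormSq (fun l => calA b a (Hmap h x) l - yvec b a h0 x0 e l)

def G0 (z : ℝ) : ℝ := max (z - 1) 0 ^ 2

def G0' (z : ℝ) : ℝ := 2 * max (z - 1) 0

/-- The `i`-th regularizer `Gᵢ(hᵢ,xᵢ)` (including the factor `ρ`). -/
def Gi {K N L : ℕ} (b : Fin L → Fin K → ℂ) (ρ μ di : ℝ)
    (hi : Fin K → ℂ) (xi : Fin N → ℂ) : ℝ :=
  ρ * (G0 (vnormSq hi / (2 * di)) + G0 (vnormSq xi / (2 * di))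
    + ∑ l, G0 ((L : ℝ) * ‖vinner (b l) hi‖ ^ 2 / (8 * di * μ ^ 2)))

/-- The regularizer `G(h,x) = Σᵢ Gᵢ(hᵢ,xᵢ)`. -/
def Greg {K N L s : ℕ} (b : Fin L → Fin K → ℂ) (ρ μ : ℝ) (dd : Fin s → ℝ)
    (h : Fin s → Fin K → ℂ) (x : Fin s → Fin N → ℂ) : ℝ :=
  ∑ i, Gi b ρ μ (dd i) (h i) (x i)

/-- `F̃ = F + G`. -/
def Ftil {K N L s : ℕ} (b : Fin L → Fin K → ℂ) (a : Fin s → Fin L → Fin N → ℂ)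
    (h0 : Fin s → Fin K → ℂ) (x0 : Fin s → Fin N → ℂ) (e : Fin L → ℂ)
    (ρ μ : ℝ) (dd : Fin s → ℝ)
    (h : Fin s → Fin K → ℂ) (x : Fin s → Fin N → ℂ) : ℝ :=
  Fobj b a h0 x0 e h x + Greg b ρ μ dd h x

/-- The residual `𝒜(ℋ(h,x)) − y`. -/
def residual {K N L s : ℕ} (b : Fin L → Fin K → ℂ) (a : Fin s → Fin L → Fin N → ℂ)
    (h0 : Fin s → Fin K → ℂ) (x0 : Fin s → Fin N → ℂ) (e : Fin L → ℂ)
    (h : Fin s → Fin K → ℂ) (x : Fin s → Fin N → ℂ) : Fin L → ℂ :=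
  fun l => calA b a (Hmap h x) l - yvec b a h0 x0 e l

/-- Wirtinger gradient `∇F_{hᵢ} = 𝒜ᵢ*(𝒜(ℋ(h,x)) − y) xᵢ`. -/
def gradFh {K N L s : ℕ} (b : Fin L → Fin K → ℂ) (a : Fin s → Fin L → Fin N → ℂ)
    (h0 : Fin s → Fin K → ℂ) (x0 : Fin s → Fin N → ℂ) (e : Fin L → ℂ)
    (h : Fin s → Fin K → ℂ) (x : Fin s → Fin N → ℂ) (i : Fin s) : Fin K → ℂ :=
  (calAdj b (a i) (residual b a h0 x0 e h x)).mulVec (x i)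

/-- Wirtinger gradient `∇F_{xᵢ} = (𝒜ᵢ*(𝒜(ℋ(h,x)) − y))* hᵢ`. -/
def gradFx {K N L s : ℕ} (b : Fin L → Fin K → ℂ) (a : Fin s → Fin L → Fin N → ℂ)
    (h0 : Fin s → Fin K → ℂ) (x0 : Fin s → Fin N → ℂ) (e : Fin L → ℂ)
    (h : Fin s → Fin K → ℂ) (x : Fin s → Fin N → ℂ) (i : Fin s) : Fin N → ℂ :=
  (calAdj b (a i) (residual b a h0 x0 e h x)).conjTranspose.mulVec (h i)

/-- Wirtinger gradient `∇G_{hᵢ}`. -/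
def gradGh {K L s : ℕ} (b : Fin L → Fin K → ℂ) (ρ μ : ℝ) (dd : Fin s → ℝ)
    (h : Fin s → Fin K → ℂ) (i : Fin s) : Fin K → ℂ :=
  fun k => ((ρ / (2 * dd i) : ℝ) : ℂ) *
    (((G0' (vnormSq (h i) / (2 * dd i)) : ℝ) : ℂ) * h i k
      + (((L : ℝ) / (4 * μ ^ 2) : ℝ) : ℂ) *
        ∑ l, ((G0' ((L : ℝ) * ‖vinner (b l) (h i)‖ ^ 2 / (8 * dd i * μ ^ 2)) : ℝ) : ℂ)
          * (vinner (b l) (h i) * b l k))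

/-- Wirtinger gradient `∇G_{xᵢ}`. -/
def gradGx {N s : ℕ} (ρ : ℝ) (dd : Fin s → ℝ)
    (x : Fin s → Fin N → ℂ) (i : Fin s) : Fin N → ℂ :=
  fun j => ((ρ / (2 * dd i) : ℝ) : ℂ) * (((G0' (vnormSq (x i) / (2 * dd i)) : ℝ) : ℂ) * x i j)

/-- `∇F̃_{hᵢ} = ∇F_{hᵢ} + ∇G_{hᵢ}`. -/
def gradH {K N L s : ℕ} (b : Fin L → Fin K → ℂ) (a : Fin s → Fin L → Fin N → ℂ)
    (h0 : Fin s → Fin K → ℂ) (x0 : Fin s → Fin N → ℂ) (e : Fin L → ℂ)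
    (ρ μ : ℝ) (dd : Fin s → ℝ)
    (h : Fin s → Fin K → ℂ) (x : Fin s → Fin N → ℂ) (i : Fin s) : Fin K → ℂ :=
  fun k => gradFh b a h0 x0 e h x i k + gradGh b ρ μ dd h i k

/-- `∇F̃_{xᵢ} = ∇F_{xᵢ} + ∇G_{xᵢ}`. -/
def gradX {K N L s : ℕ} (b : Fin L → Fin K → ℂ) (a : Fin s → Fin L → Fin N → ℂ)
    (h0 : Fin s → Fin K → ℂ) (x0 : Fin s → Fin N → ℂ) (e : Fin L → ℂ)
    (ρ μ : ℝ) (dd : Fin s → ℝ)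
    (h : Fin s → Fin K → ℂ) (x : Fin s → Fin N → ℂ) (i : Fin s) : Fin N → ℂ :=
  fun j => gradFx b a h0 x0 e h x i j + gradGx ρ dd x i j

/-- `‖∇F̃(h,x)‖²` (squared norm of the stacked Wirtinger gradient). -/
def gradNormSq {K N L s : ℕ} (b : Fin L → Fin K → ℂ) (a : Fin s → Fin L → Fin N → ℂ)
    (h0 : Fin s → Fin K → ℂ) (x0 : Fin s → Fin N → ℂ) (e : Fin L → ℂ)
    (ρ μ : ℝ) (dd : Fin s → ℝ)
    (h : Fin s → Fin K → ℂ) (x : Fin s → Fin N → ℂ) : ℝ :=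
  ∑ i, vnormSq (gradH b a h0 x0 e ρ μ dd h x i) + ∑ i, vnormSq (gradX b a h0 x0 e ρ μ dd h x i)

/-- `‖∇F̃(h',x') − ∇F̃(h,x)‖²`. -/
def gradDiffNormSq {K N L s : ℕ} (b : Fin L → Fin K → ℂ) (a : Fin s → Fin L → Fin N → ℂ)
    (h0 : Fin s → Fin K → ℂ) (x0 : Fin s → Fin N → ℂ) (e : Fin L → ℂ)
    (ρ μ : ℝ) (dd : Fin s → ℝ)
    (h : Fin s → Fin K → ℂ) (x : Fin s → Fin N → ℂ)
    (h' : Fin s → Fin K → ℂ) (x' : Fin s → Fin N → ℂ) : ℝ :=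
  ∑ i, vnormSq (fun k => gradH b a h0 x0 e ρ μ dd h' x' i k - gradH b a h0 x0 e ρ μ dd h x i k)
  + ∑ i, vnormSq (fun j => gradX b a h0 x0 e ρ μ dd h' x' i j - gradX b a h0 x0 e ρ μ dd h x i j)

/-- Membership in `𝒩_d`. -/
def inNd {K N s : ℕ} (d0 : Fin s → ℝ)
    (h : Fin s → Fin K → ℂ) (x : Fin s → Fin N → ℂ) : Prop :=
  ∀ i, vnorm (h i) ≤ 2 * Real.sqrt (d0 i) ∧ vnorm (x i) ≤ 2 * Real.sqrt (d0 i)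

/-- Membership in `𝒩_μ`. -/
def inNmu {K L s : ℕ} (b : Fin L → Fin K → ℂ) (d0 : Fin s → ℝ) (μ : ℝ)
    (h : Fin s → Fin K → ℂ) : Prop :=
  ∀ i, ∀ l, Real.sqrt L * ‖vinner (b l) (h i)‖ ≤ 4 * Real.sqrt (d0 i) * μ

/-- `δᵢ(hᵢ,xᵢ) = ‖hᵢxᵢ* − h_{i0}x_{i0}*‖_F / d_{i0}`. -/
def deltaI {K N : ℕ} (h0i : Fin K → ℂ) (x0i : Fin N → ℂ) (d0i : ℝ)
    (hi : Fin K → ℂ) (xi : Fin N → ℂ) : ℝ :=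
  frob (rankOne hi xi - rankOne h0i x0i) / d0i

/-- Membership in `𝒩_ε`. -/
def inNeps {K N s : ℕ} (h0 : Fin s → Fin K → ℂ) (x0 : Fin s → Fin N → ℂ)
    (d0 : Fin s → ℝ) (ε : ℝ)
    (h : Fin s → Fin K → ℂ) (x : Fin s → Fin N → ℂ) : Prop :=
  ∀ i, deltaI (h0 i) (x0 i) (d0 i) (h i) (x i) ≤ ε

/-- The global relative error `δ(h,x) = ‖ℋ(h,x) − X₀‖_F / d₀`. -/
def deltaTot {K N s : ℕ} (h0 : Fin s → Fin K → ℂ) (x0 : Fin s → Fin N → ℂ)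
    (d0 : Fin s → ℝ)
    (h : Fin s → Fin K → ℂ) (x : Fin s → Fin N → ℂ) : ℝ :=
  famFrob (fun i => Hmap h x i - Hmap h0 x0 i) / dtot d0

/-- Membership in `𝒩_F̃`. -/
def inNF {K N L s : ℕ} (b : Fin L → Fin K → ℂ) (a : Fin s → Fin L → Fin N → ℂ)
    (h0 : Fin s → Fin K → ℂ) (x0 : Fin s → Fin N → ℂ) (e : Fin L → ℂ)
    (d0 : Fin s → ℝ) (ρ μ : ℝ) (dd : Fin s → ℝ) (ε : ℝ)
    (h : Fin s → Fin K → ℂ) (x : Fin s → Fin N → ℂ) : Prop :=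
  Ftil b a h0 x0 e ρ μ dd h x ≤ ε ^ 2 * dtot d0 ^ 2 / (3 * (s : ℝ) * kappa d0 ^ 2) + vnormSq e

/-- The Local Restricted Isometry Property on `𝒩_d ∩ 𝒩_μ ∩ 𝒩_ε`. -/
def LocalRIP {K N L s : ℕ} (b : Fin L → Fin K → ℂ) (a : Fin s → Fin L → Fin N → ℂ)
    (h0 : Fin s → Fin K → ℂ) (x0 : Fin s → Fin N → ℂ)
    (d0 : Fin s → ℝ) (μ ε : ℝ) : Prop :=
  ∀ (h : Fin s → Fin K → ℂ) (x : Fin s → Fin N → ℂ),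
    inNd d0 h x → inNmu b d0 μ h → inNeps h0 x0 d0 ε h x →
      (2 / 3) * famFrobSq (fun i => Hmap h x i - Hmap h0 x0 i)
          ≤ vnormSq (calA b a fun i => Hmap h x i - Hmap h0 x0 i)
      ∧ vnormSq (calA b a fun i => Hmap h x i - Hmap h0 x0 i)
          ≤ (3 / 2) * famFrobSq (fun i => Hmap h x i - Hmap h0 x0 i)

/-- `α_{i1} = ⟨h_{i0}, hᵢ⟩ / d_{i0}`. -/
def alpha1 {K s : ℕ} (h0 : Fin s → Fin K → ℂ) (d0 : Fin s → ℝ)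
    (h : Fin s → Fin K → ℂ) (i : Fin s) : ℂ :=
  vinner (h0 i) (h i) / ((d0 i : ℝ) : ℂ)

/-- `α_{i2} = ⟨x_{i0}, xᵢ⟩ / d_{i0}`. -/
def alpha2 {N s : ℕ} (x0 : Fin s → Fin N → ℂ) (d0 : Fin s → ℝ)
    (x : Fin s → Fin N → ℂ) (i : Fin s) : ℂ :=
  vinner (x0 i) (x i) / ((d0 i : ℝ) : ℂ)

/-- `δ₀ = δ/10`. -/
def delta0 {K N s : ℕ} (h0 : Fin s → Fin K → ℂ) (x0 : Fin s → Fin N → ℂ)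
    (d0 : Fin s → ℝ) (h : Fin s → Fin K → ℂ) (x : Fin s → Fin N → ℂ) : ℝ :=
  deltaTot h0 x0 d0 h x / 10

/-- `αᵢ = (1−δ₀)α_{i1}` if `‖hᵢ‖ ≥ ‖xᵢ‖`, else `1/((1−δ₀) conj(α_{i2}))`. -/
def alphaC {K N s : ℕ} (h0 : Fin s → Fin K → ℂ) (x0 : Fin s → Fin N → ℂ)
    (d0 : Fin s → ℝ) (h : Fin s → Fin K → ℂ) (x : Fin s → Fin N → ℂ) (i : Fin s) : ℂ :=
  if vnorm (x i) ≤ vnorm (h i)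
  then ((1 - delta0 h0 x0 d0 h x : ℝ) : ℂ) * alpha1 h0 d0 h i
  else 1 / (((1 - delta0 h0 x0 d0 h x : ℝ) : ℂ) * conj (alpha2 x0 d0 x i))

/-- `Δhᵢ = hᵢ − αᵢ h_{i0}`. -/
def dh {K N s : ℕ} (h0 : Fin s → Fin K → ℂ) (x0 : Fin s → Fin N → ℂ)
    (d0 : Fin s → ℝ) (h : Fin s → Fin K → ℂ) (x : Fin s → Fin N → ℂ) (i : Fin s) :
    Fin K → ℂ :=
  fun k => h i k - alphaC h0 x0 d0 h x i * h0 i k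

/-- `Δxᵢ = xᵢ − conj(αᵢ)⁻¹ x_{i0}`. -/
def dx {K N s : ℕ} (h0 : Fin s → Fin K → ℂ) (x0 : Fin s → Fin N → ℂ)
    (d0 : Fin s → ℝ) (h : Fin s → Fin K → ℂ) (x : Fin s → Fin N → ℂ) (i : Fin s) :
    Fin N → ℂ :=
  fun j => x i j - (conj (alphaC h0 x0 d0 h x i))⁻¹ * x0 i j

/-- `σ²_max(h,x) = maxₗ Σᵢ |bₗ*hᵢ|² ‖xᵢ‖²`. -/
def sigmaMaxSq {K N L s : ℕ} (b : Fin L → Fin K → ℂ)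
    (h : Fin s → Fin K → ℂ) (x : Fin s → Fin N → ℂ) : ℝ :=
  ⨆ l : Fin L, ∑ i, ‖vinner (b l) (h i)‖ ^ 2 * vnormSq (x i)

/-- The rank-one bound (Lemma: `𝒜` on block-diagonal matrices with rank-1 blocks). -/
def RankOneBound {K N L s : ℕ} (b : Fin L → Fin K → ℂ)
    (a : Fin s → Fin L → Fin N → ℂ) : Prop :=
  ∀ (h : Fin s → Fin K → ℂ) (x : Fin s → Fin N → ℂ),
    vnormSq (calA b a (Hmap h x)) ≤
      4 / 3 * famFrobSq (Hmap h x)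
      + 2 * Real.sqrt (2 * (s : ℝ) * famFrobSq (Hmap h x) * sigmaMaxSq b h x
          * ((K : ℝ) + N) * Real.log L)
      + 8 * (s : ℝ) * sigmaMaxSq b h x * ((K : ℝ) + N) * Real.log L

/-- The subspace `Tᵢ = {h_{i0} v* + u x_{i0}*}`. -/
def Tspace {K N : ℕ} (h0i : Fin K → ℂ) (x0i : Fin N → ℂ) :
    Set (Matrix (Fin K) (Fin N) ℂ) :=
  {Z | ∃ (u : Fin K → ℂ) (v : Fin N → ℂ), Z = rankOne h0i v + rankOne u x0i}

/-- `P` is the orthogonal projection onto `Tᵢ` w.r.t. the Frobenius inner product. -/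
def IsFrobProj {K N : ℕ} (h0i : Fin K → ℂ) (x0i : Fin N → ℂ)
    (P : Matrix (Fin K) (Fin N) ℂ → Matrix (Fin K) (Fin N) ℂ) : Prop :=
  ∀ Z, P Z ∈ Tspace h0i x0i ∧ ∀ W ∈ Tspace h0i x0i, finner W (Z - P Z) = 0

/-- Operator norm of `𝒜ᵢ` from `(ℂ^{K×N}, ‖·‖_F)` to `(ℂ^L, ‖·‖)`. -/
def calAiOpNorm {K N L : ℕ} (b : Fin L → Fin K → ℂ) (a : Fin L → Fin N → ℂ) : ℝ :=
  sSup {r : ℝ | ∃ Z : Matrix (Fin K) (Fin N) ℂ, frob Z ≤ 1 ∧ r = vnorm (calAi b a Z)}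

/-- Operator norm of `𝒜` from block-diagonal matrices with `‖·‖_F` to `ℂ^L`. -/
def calAOpNorm {K N L s : ℕ} (b : Fin L → Fin K → ℂ)
    (a : Fin s → Fin L → Fin N → ℂ) : ℝ :=
  sSup {r : ℝ | ∃ Z : Fin s → Matrix (Fin K) (Fin N) ℂ, famFrob Z ≤ 1 ∧ r = vnorm (calA b a Z)}

/-- Norm of a stacked vector in `ℂ^{ns}`. -/
def stackNorm {n s : ℕ} (u : Fin s → Fin n → ℂ) : ℝ := Real.sqrt (∑ i, vnormSq (u i))

/-- Norm of a point `z = (h,x) ∈ ℂ^{s(K+N)}`. -/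
def pairNorm {K N s : ℕ} (u : Fin s → Fin K → ℂ) (v : Fin s → Fin N → ℂ) : ℝ :=
  Real.sqrt (∑ i, vnormSq (u i) + ∑ i, vnormSq (v i))

/-- `z + t • w` componentwise, `t` real. -/
def shiftV {n s : ℕ} (u w : Fin s → Fin n → ℂ) (t : ℝ) : Fin s → Fin n → ℂ :=
  fun i k => u i k + (t : ℂ) * w i k

/-- `σ_max(h) = maxₗ √(Σᵢ |bₗ*hᵢ|²)` (unit `xᵢ`'s). -/
def sigmaMaxU {K L s : ℕ} (b : Fin L → Fin K → ℂ) (h : Fin s → Fin K → ℂ) : ℝ :=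
  ⨆ l, Real.sqrt (∑ i, ‖vinner (b l) (h i)‖ ^ 2)

/-!
After division by `√dᵢ₀` the reference vectors become unit vectors `e`, `f`, and conjugating the
second factor turns `h x*` into an elementary tensor `u ⊗ v` at distance `δ` from `e ⊗ f`. The
difference splits orthogonally along `e ⊗ f`, `e ⊗ fᗮ`, `eᗮ ⊗ f` and `eᗮ ⊗ fᗮ`, so that
`⟪e, u⟫⟪f, v⟫` is within `δ` of `1`, and the orthogonal components of `u` and `v` are at most
`δ / ‖v‖` and `δ / ‖u‖`. The longer factor has norm at least `√(14/15)` and nearly all of it lies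
along its reference vector; so both its shrunk coefficient and the inverse of that coefficient are
bounded, and the inverse approximates the coefficient of the shorter factor.
-/

section TensorPerturbation

open scoped TensorProduct InnerProductSpace

variable {𝕜 E F : Type*} [RCLike 𝕜] [NormedAddCommGroup E] [InnerProductSpace 𝕜 E]
  [NormedAddCommGroup F] [InnerProductSpace 𝕜 F]

variable (𝕜) in
/-- The component of `u` orthogonal to the unit vector `e`. -/
def orthPart (e u : E) : E := u - ⟪e, u⟫_𝕜 • e

variable (𝕜) in
/-- The coefficient of `u` along the unit vector `e`, shrunk by the factor `1 - c`. When `u` is the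
longer factor of a tensor `u ⊗ v` close to `e ⊗ f`, this is the scalar with which `u` is compared to
`e`, its inverse serving for `v` and `f`. -/
def alignCoeff (c : ℝ) (e u : E) : 𝕜 := (1 - c) * ⟪e, u⟫_𝕜

theorem norm_inner_le_of_norm_eq_one {e : E} (he : ‖e‖ = 1) (u : E) : ‖⟪e, u⟫_𝕜‖ ≤ ‖u‖ := by
  simpa only [he, one_mul] using norm_inner_le_norm (𝕜 := 𝕜) e u

theorem inner_orthPart {e : E} (he : ‖e‖ = 1) (u : E) : ⟪e, orthPart 𝕜 e u⟫_𝕜 = 0 := by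
  rw [orthPart, inner_sub_right, inner_smul_right, inner_self_eq_norm_sq_to_K, he]
  simp

theorem norm_sub_smul_sq {e : E} (he : ‖e‖ = 1) (u : E) (t : 𝕜) :
    ‖u - t • e‖ ^ 2 = ‖⟪e, u⟫_𝕜 - t‖ ^ 2 + ‖orthPart 𝕜 e u‖ ^ 2 := by
  have hdecomp : u - t • e = (⟪e, u⟫_𝕜 - t) • e + orthPart 𝕜 e u := by
    rw [orthPart, sub_smul]
    abel
  have horth : ⟪(⟪e, u⟫_𝕜 - t) • e, orthPart 𝕜 e u⟫_𝕜 = 0 := by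
    rw [inner_smul_left, inner_orthPart he, mul_zero]
  rw [hdecomp, sq, norm_add_sq_eq_norm_sq_add_norm_sq_of_inner_eq_zero _ _ horth, norm_smul, he,
    mul_one, sq, sq]

theorem norm_sq_eq_norm_inner_sq_add {e : E} (he : ‖e‖ = 1) (u : E) :
    ‖u‖ ^ 2 = ‖⟪e, u⟫_𝕜‖ ^ 2 + ‖orthPart 𝕜 e u‖ ^ 2 := by
  simpa only [zero_smul, sub_zero] using norm_sub_smul_sq he u (0 : 𝕜)

/-- The four terms are the squared norms of the components of `u ⊗ v - e ⊗ f` along `e ⊗ f`,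
`e ⊗ fᗮ`, `eᗮ ⊗ f` and `eᗮ ⊗ fᗮ`. -/
theorem norm_tmul_sub_tmul_sq {e : E} {f : F} (he : ‖e‖ = 1) (hf : ‖f‖ = 1) (u : E) (v : F) :
    ‖u ⊗ₜ[𝕜] v - e ⊗ₜ f‖ ^ 2 =
      ‖⟪e, u⟫_𝕜 * ⟪f, v⟫_𝕜 - 1‖ ^ 2 + ‖⟪e, u⟫_𝕜‖ ^ 2 * ‖orthPart 𝕜 f v‖ ^ 2 +
        ‖orthPart 𝕜 e u‖ ^ 2 * ‖⟪f, v⟫_𝕜‖ ^ 2 + ‖orthPart 𝕜 e u‖ ^ 2 * ‖orthPart 𝕜 f v‖ ^ 2 := by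
  have hproj : ⟪e ⊗ₜ[𝕜] f, u ⊗ₜ[𝕜] v⟫_𝕜 = ⟪e, u⟫_𝕜 * ⟪f, v⟫_𝕜 := TensorProduct.inner_tmul ..
  have hscalar : ‖⟪e, u⟫_𝕜 * ⟪f, v⟫_𝕜 - 1‖ ^ 2 =
      ‖⟪e, u⟫_𝕜‖ ^ 2 * ‖⟪f, v⟫_𝕜‖ ^ 2 - 2 * RCLike.re (⟪e, u⟫_𝕜 * ⟪f, v⟫_𝕜) + 1 := by
    rw [@norm_sub_sq 𝕜, inner_re_symm, RCLike.inner_apply, map_one, mul_one, norm_one, norm_mul]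
    ring
  rw [@norm_sub_sq 𝕜, inner_re_symm, hproj, hscalar, TensorProduct.norm_tmul,
    TensorProduct.norm_tmul, he, hf, mul_pow, norm_sq_eq_norm_inner_sq_add (𝕜 := 𝕜) he u,
    norm_sq_eq_norm_inner_sq_add (𝕜 := 𝕜) hf v]
  ring

theorem norm_inner_mul_inner_sub_one_le {e : E} {f : F} (he : ‖e‖ = 1) (hf : ‖f‖ = 1)
    (u : E) (v : F) : ‖⟪e, u⟫_𝕜 * ⟪f, v⟫_𝕜 - 1‖ ≤ ‖u ⊗ₜ[𝕜] v - e ⊗ₜ f‖ := by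
  refine le_of_sq_le_sq ?_ (norm_nonneg _)
  rw [norm_tmul_sub_tmul_sq he hf, add_assoc, add_assoc]
  exact le_add_of_nonneg_right (by positivity)

theorem norm_orthPart_sq_mul_norm_sq_le {e : E} {f : F} (he : ‖e‖ = 1) (hf : ‖f‖ = 1)
    (u : E) (v : F) : ‖orthPart 𝕜 e u‖ ^ 2 * ‖v‖ ^ 2 ≤ ‖u ⊗ₜ[𝕜] v - e ⊗ₜ f‖ ^ 2 := by
  rw [norm_tmul_sub_tmul_sq he hf, norm_sq_eq_norm_inner_sq_add (𝕜 := 𝕜) hf v, mul_add, add_assoc]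
  exact le_add_of_nonneg_left (by positivity)

theorem norm_sq_mul_norm_orthPart_sq_le {e : E} {f : F} (he : ‖e‖ = 1) (hf : ‖f‖ = 1)
    (u : E) (v : F) : ‖u‖ ^ 2 * ‖orthPart 𝕜 f v‖ ^ 2 ≤ ‖u ⊗ₜ[𝕜] v - e ⊗ₜ f‖ ^ 2 := by
  rw [norm_tmul_sub_tmul_sq he hf, norm_sq_eq_norm_inner_sq_add (𝕜 := 𝕜) he u, add_mul]
  linarith [sq_nonneg ‖⟪e, u⟫_𝕜 * ⟪f, v⟫_𝕜 - 1‖,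
    mul_nonneg (sq_nonneg ‖orthPart 𝕜 e u‖) (sq_nonneg ‖⟪f, v⟫_𝕜‖)]

theorem one_sub_norm_tmul_sub_tmul_le {e : E} {f : F} (he : ‖e‖ = 1) (hf : ‖f‖ = 1)
    (u : E) (v : F) : 1 - ‖u ⊗ₜ[𝕜] v - e ⊗ₜ f‖ ≤ ‖u‖ * ‖v‖ := by
  have htriangle := norm_sub_norm_le (e ⊗ₜ[𝕜] f) (u ⊗ₜ[𝕜] v)
  rw [norm_sub_rev, TensorProduct.norm_tmul, TensorProduct.norm_tmul, he, hf, mul_one] at htriangle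
  linarith

theorem norm_sub_alignCoeff_smul_sq {e : E} (he : ‖e‖ = 1) (c : ℝ) (u : E) :
    ‖u - alignCoeff 𝕜 c e u • e‖ ^ 2 = c ^ 2 * ‖⟪e, u⟫_𝕜‖ ^ 2 + ‖orthPart 𝕜 e u‖ ^ 2 := by
  have hcoeff : ⟪e, u⟫_𝕜 - alignCoeff 𝕜 c e u = (c : 𝕜) * ⟪e, u⟫_𝕜 := by
    rw [alignCoeff]
    ring
  rw [norm_sub_smul_sq he, hcoeff, norm_mul, mul_pow, RCLike.norm_ofReal, sq_abs]

theorem norm_alignCoeff {c : ℝ} (hc : c ≤ 1) (e u : E) :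
    ‖alignCoeff 𝕜 c e u‖ = (1 - c) * ‖⟪e, u⟫_𝕜‖ := by
  rw [alignCoeff, norm_mul, ← RCLike.ofReal_one, ← RCLike.ofReal_sub,
    RCLike.norm_of_nonneg (sub_nonneg.mpr hc)]

theorem norm_sub_inv_mul_le {a : 𝕜} (ha : a ≠ 0) (b : 𝕜) {c : ℝ} (hc : 0 ≤ c) (hc1 : c < 1) :
    ‖b - ((1 - c) * a)⁻¹‖ * ‖a‖ ≤ ‖a * b - 1‖ + c / (1 - c) := by
  have hc1' : (1 - c : 𝕜) ≠ 0 := mod_cast (sub_pos.mpr hc1).ne'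
  have hfactor : (b - ((1 - c) * a)⁻¹) * a = (a * b - 1) - ((c / (1 - c) : ℝ) : 𝕜) := by
    push_cast
    field_simp
    ring
  have hquot : 0 ≤ c / (1 - c) := div_nonneg hc (sub_pos.mpr hc1).le
  rw [← norm_mul, hfactor]
  exact (norm_sub_le _ _).trans_eq (by rw [RCLike.norm_of_nonneg hquot])

section DominatingFactor

variable {e u : E} {f v : F}

theorem norm_sq_mul_norm_sq_ge (he : ‖e‖ = 1) (hf : ‖f‖ = 1)
    (hδ : ‖u ⊗ₜ[𝕜] v - e ⊗ₜ f‖ ≤ 1 / 15) : 196 / 225 ≤ ‖u‖ ^ 2 * ‖v‖ ^ 2 := by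
  have hlower : 14 / 15 ≤ ‖u‖ * ‖v‖ := by
    linarith [one_sub_norm_tmul_sub_tmul_le (𝕜 := 𝕜) he hf u v]
  calc (196 / 225 : ℝ) = (14 / 15) ^ 2 := by norm_num
    _ ≤ (‖u‖ * ‖v‖) ^ 2 := by gcongr
    _ = ‖u‖ ^ 2 * ‖v‖ ^ 2 := mul_pow ..

theorem norm_sq_dominating_ge (he : ‖e‖ = 1) (hf : ‖f‖ = 1) (hvu : ‖v‖ ≤ ‖u‖)
    (hδ : ‖u ⊗ₜ[𝕜] v - e ⊗ₜ f‖ ≤ 1 / 15) : 14 / 15 ≤ ‖u‖ ^ 2 := by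
  calc (14 / 15 : ℝ) ≤ 1 - ‖u ⊗ₜ[𝕜] v - e ⊗ₜ f‖ := by linarith
    _ ≤ ‖u‖ * ‖v‖ := one_sub_norm_tmul_sub_tmul_le he hf u v
    _ ≤ ‖u‖ ^ 2 := by rw [sq]; gcongr

theorem norm_orthPart_sq_le_mul (he : ‖e‖ = 1) (hf : ‖f‖ = 1)
    (hδ : ‖u ⊗ₜ[𝕜] v - e ⊗ₜ f‖ ≤ 1 / 15) :
    ‖orthPart 𝕜 e u‖ ^ 2 ≤ 225 / 196 * ‖u ⊗ₜ[𝕜] v - e ⊗ₜ f‖ ^ 2 * ‖u‖ ^ 2 := by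
  have hcross := mul_le_mul_of_nonneg_right (norm_orthPart_sq_mul_norm_sq_le (𝕜 := 𝕜) he hf u v)
    (sq_nonneg ‖u‖)
  have hlower := mul_le_mul_of_nonneg_left (norm_sq_mul_norm_sq_ge he hf hδ)
    (sq_nonneg ‖orthPart 𝕜 e u‖)
  linarith

theorem norm_inner_sq_ge (he : ‖e‖ = 1) (hf : ‖f‖ = 1) (hvu : ‖v‖ ≤ ‖u‖)
    (hδ : ‖u ⊗ₜ[𝕜] v - e ⊗ₜ f‖ ≤ 1 / 15) : 13 / 14 ≤ ‖⟪e, u⟫_𝕜‖ ^ 2 := by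
  have horth : ‖orthPart 𝕜 e u‖ ^ 2 ≤ 225 / 196 * (1 / 15) ^ 2 * ‖u‖ ^ 2 := by
    refine (norm_orthPart_sq_le_mul he hf hδ).trans ?_
    gcongr
  linarith [norm_sq_eq_norm_inner_sq_add (𝕜 := 𝕜) he u, norm_sq_dominating_ge he hf hvu hδ]

theorem norm_orthPart_dominating_sq_le (he : ‖e‖ = 1) (hf : ‖f‖ = 1) (hu : ‖u‖ ≤ 2)
    (hδ : ‖u ⊗ₜ[𝕜] v - e ⊗ₜ f‖ ≤ 1 / 15) :
    ‖orthPart 𝕜 e u‖ ^ 2 ≤ 225 / 49 * ‖u ⊗ₜ[𝕜] v - e ⊗ₜ f‖ ^ 2 := by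
  calc ‖orthPart 𝕜 e u‖ ^ 2 ≤ 225 / 196 * ‖u ⊗ₜ[𝕜] v - e ⊗ₜ f‖ ^ 2 * ‖u‖ ^ 2 :=
        norm_orthPart_sq_le_mul he hf hδ
    _ ≤ 225 / 196 * ‖u ⊗ₜ[𝕜] v - e ⊗ₜ f‖ ^ 2 * 2 ^ 2 := by gcongr
    _ = 225 / 49 * ‖u ⊗ₜ[𝕜] v - e ⊗ₜ f‖ ^ 2 := by ring

theorem norm_orthPart_dominated_sq_le (he : ‖e‖ = 1) (hf : ‖f‖ = 1) (hvu : ‖v‖ ≤ ‖u‖)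
    (hδ : ‖u ⊗ₜ[𝕜] v - e ⊗ₜ f‖ ≤ 1 / 15) :
    ‖orthPart 𝕜 f v‖ ^ 2 ≤ 15 / 14 * ‖u ⊗ₜ[𝕜] v - e ⊗ₜ f‖ ^ 2 := by
  have hlower := mul_le_mul_of_nonneg_right (norm_sq_dominating_ge he hf hvu hδ)
    (sq_nonneg ‖orthPart 𝕜 f v‖)
  linarith [norm_sq_mul_norm_orthPart_sq_le (𝕜 := 𝕜) he hf u v]

theorem norm_orthPart_sq_mul_norm_orthPart_sq_le (he : ‖e‖ = 1) (hf : ‖f‖ = 1)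
    (hδ : ‖u ⊗ₜ[𝕜] v - e ⊗ₜ f‖ ≤ 1 / 15) :
    ‖orthPart 𝕜 e u‖ ^ 2 * ‖orthPart 𝕜 f v‖ ^ 2 ≤ ‖u ⊗ₜ[𝕜] v - e ⊗ₜ f‖ ^ 2 / 196 := by
  calc ‖orthPart 𝕜 e u‖ ^ 2 * ‖orthPart 𝕜 f v‖ ^ 2
      ≤ 225 / 196 * ‖u ⊗ₜ[𝕜] v - e ⊗ₜ f‖ ^ 2 * ‖u‖ ^ 2 * ‖orthPart 𝕜 f v‖ ^ 2 := by
        gcongr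
        exact norm_orthPart_sq_le_mul he hf hδ
    _ = 225 / 196 * ‖u ⊗ₜ[𝕜] v - e ⊗ₜ f‖ ^ 2 * (‖u‖ ^ 2 * ‖orthPart 𝕜 f v‖ ^ 2) := by ring
    _ ≤ 225 / 196 * ‖u ⊗ₜ[𝕜] v - e ⊗ₜ f‖ ^ 2 * (1 / 15) ^ 2 := by
        gcongr
        exact (norm_sq_mul_norm_orthPart_sq_le he hf u v).trans (by gcongr)
    _ = ‖u ⊗ₜ[𝕜] v - e ⊗ₜ f‖ ^ 2 / 196 := by ring

theorem norm_inner_sub_inv_alignCoeff_mul_le (he : ‖e‖ = 1) (hf : ‖f‖ = 1) (hvu : ‖v‖ ≤ ‖u‖)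
    (hδ : ‖u ⊗ₜ[𝕜] v - e ⊗ₜ f‖ ≤ 1 / 15) {c : ℝ} (hc : 0 ≤ c) (hc150 : c ≤ 1 / 150) :
    ‖⟪f, v⟫_𝕜 - (alignCoeff 𝕜 c e u)⁻¹‖ * ‖⟪e, u⟫_𝕜‖ ≤
      ‖u ⊗ₜ[𝕜] v - e ⊗ₜ f‖ + 150 / 149 * c := by
  have hinner : ⟪e, u⟫_𝕜 ≠ 0 := by
    intro hzero
    have hlower := norm_inner_sq_ge (𝕜 := 𝕜) he hf hvu hδ
    rw [hzero, norm_zero] at hlower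
    norm_num at hlower
  have hquot : c / (1 - c) ≤ 150 / 149 * c := by
    rw [div_eq_inv_mul]
    gcongr
    exact inv_le_of_inv_le₀ (by norm_num) (by linarith)
  exact (norm_sub_inv_mul_le hinner _ hc (by linarith)).trans
    (add_le_add (norm_inner_mul_inner_sub_one_le he hf u v) hquot)

theorem norm_inner_sub_inv_alignCoeff_sq_mul_le (he : ‖e‖ = 1) (hf : ‖f‖ = 1) (hvu : ‖v‖ ≤ ‖u‖)
    (hδ : ‖u ⊗ₜ[𝕜] v - e ⊗ₜ f‖ ≤ 1 / 15) {c : ℝ} (hc : 0 ≤ c) (hc150 : c ≤ 1 / 150) :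
    ‖⟪f, v⟫_𝕜 - (alignCoeff 𝕜 c e u)⁻¹‖ ^ 2 * ‖⟪e, u⟫_𝕜‖ ^ 2 ≤
      (‖u ⊗ₜ[𝕜] v - e ⊗ₜ f‖ + 150 / 149 * c) ^ 2 := by
  rw [← mul_pow]
  gcongr
  exact norm_inner_sub_inv_alignCoeff_mul_le he hf hvu hδ hc hc150

theorem norm_inner_sub_inv_alignCoeff_sq_mul_le_const (he : ‖e‖ = 1) (hf : ‖f‖ = 1)
    (hvu : ‖v‖ ≤ ‖u‖) (hδ : ‖u ⊗ₜ[𝕜] v - e ⊗ₜ f‖ ≤ 1 / 15) {c : ℝ} (hc : 0 ≤ c)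
    (hc150 : c ≤ 1 / 150) :
    ‖⟪f, v⟫_𝕜 - (alignCoeff 𝕜 c e u)⁻¹‖ ^ 2 * ‖⟪e, u⟫_𝕜‖ ^ 2 ≤ 11 / 2000 := by
  calc ‖⟪f, v⟫_𝕜 - (alignCoeff 𝕜 c e u)⁻¹‖ ^ 2 * ‖⟪e, u⟫_𝕜‖ ^ 2
      ≤ (‖u ⊗ₜ[𝕜] v - e ⊗ₜ f‖ + 150 / 149 * c) ^ 2 :=
        norm_inner_sub_inv_alignCoeff_sq_mul_le he hf hvu hδ hc hc150
    _ ≤ (1 / 15 + 150 / 149 * (1 / 150)) ^ 2 := by gcongr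
    _ ≤ 11 / 2000 := by norm_num

theorem norm_inner_sub_inv_alignCoeff_sq_le (he : ‖e‖ = 1) (hf : ‖f‖ = 1) (hvu : ‖v‖ ≤ ‖u‖)
    (hδ : ‖u ⊗ₜ[𝕜] v - e ⊗ₜ f‖ ≤ 1 / 15) {c : ℝ} (hc : 0 ≤ c) (hc150 : c ≤ 1 / 150) :
    ‖⟪f, v⟫_𝕜 - (alignCoeff 𝕜 c e u)⁻¹‖ ^ 2 ≤
      14 / 13 * (‖u ⊗ₜ[𝕜] v - e ⊗ₜ f‖ + 150 / 149 * c) ^ 2 := by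
  have hlower := mul_le_mul_of_nonneg_left (norm_inner_sq_ge (𝕜 := 𝕜) he hf hvu hδ)
    (sq_nonneg ‖⟪f, v⟫_𝕜 - (alignCoeff 𝕜 c e u)⁻¹‖)
  linarith [norm_inner_sub_inv_alignCoeff_sq_mul_le he hf hvu hδ hc hc150]

theorem norm_sub_alignCoeff_smul_sq_le (he : ‖e‖ = 1) (hf : ‖f‖ = 1) (hu : ‖u‖ ≤ 2)
    (hδ : ‖u ⊗ₜ[𝕜] v - e ⊗ₜ f‖ ≤ 1 / 15) (c : ℝ) :
    ‖u - alignCoeff 𝕜 c e u • e‖ ^ 2 ≤ 7.5 * ‖u ⊗ₜ[𝕜] v - e ⊗ₜ f‖ ^ 2 + 4 * c ^ 2 := by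
  have hshrink : c ^ 2 * ‖⟪e, u⟫_𝕜‖ ^ 2 ≤ c ^ 2 * 2 ^ 2 := by
    gcongr
    exact (norm_inner_le_of_norm_eq_one he u).trans hu
  rw [norm_sub_alignCoeff_smul_sq he]
  linarith [norm_orthPart_dominating_sq_le he hf hu hδ, sq_nonneg ‖u ⊗ₜ[𝕜] v - e ⊗ₜ f‖]

theorem norm_sub_inv_alignCoeff_smul_sq_le (he : ‖e‖ = 1) (hf : ‖f‖ = 1) (hvu : ‖v‖ ≤ ‖u‖)
    (hδ : ‖u ⊗ₜ[𝕜] v - e ⊗ₜ f‖ ≤ 1 / 15) {c : ℝ} (hc : 0 ≤ c) (hc150 : c ≤ 1 / 150) :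
    ‖v - (alignCoeff 𝕜 c e u)⁻¹ • f‖ ^ 2 ≤ 7.5 * ‖u ⊗ₜ[𝕜] v - e ⊗ₜ f‖ ^ 2 + 4 * c ^ 2 := by
  have hcoeff : (‖u ⊗ₜ[𝕜] v - e ⊗ₜ f‖ + 150 / 149 * c) ^ 2 ≤
      2 * ‖u ⊗ₜ[𝕜] v - e ⊗ₜ f‖ ^ 2 + 3 * c ^ 2 := by
    linarith [sq_nonneg (‖u ⊗ₜ[𝕜] v - e ⊗ₜ f‖ - 150 / 149 * c), sq_nonneg c]
  rw [norm_sub_smul_sq hf]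
  linarith [norm_inner_sub_inv_alignCoeff_sq_le he hf hvu hδ hc hc150,
    norm_orthPart_dominated_sq_le he hf hvu hδ, sq_nonneg ‖u ⊗ₜ[𝕜] v - e ⊗ₜ f‖, sq_nonneg c]

theorem norm_orthPart_sq_mul_norm_inner_sub_inv_alignCoeff_sq_le (he : ‖e‖ = 1) (hf : ‖f‖ = 1)
    (hu : ‖u‖ ≤ 2) (hvu : ‖v‖ ≤ ‖u‖) (hδ : ‖u ⊗ₜ[𝕜] v - e ⊗ₜ f‖ ≤ 1 / 15) {c : ℝ}
    (hc : 0 ≤ c) (hc150 : c ≤ 1 / 150) :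
    ‖orthPart 𝕜 e u‖ ^ 2 * ‖⟪f, v⟫_𝕜 - (alignCoeff 𝕜 c e u)⁻¹‖ ^ 2 ≤
      ‖u ⊗ₜ[𝕜] v - e ⊗ₜ f‖ ^ 2 / 36 := by
  have hcoeff : ‖⟪f, v⟫_𝕜 - (alignCoeff 𝕜 c e u)⁻¹‖ ^ 2 ≤ 14 / 13 * (11 / 2000) := by
    have hlower := mul_le_mul_of_nonneg_left (norm_inner_sq_ge (𝕜 := 𝕜) he hf hvu hδ)
      (sq_nonneg ‖⟪f, v⟫_𝕜 - (alignCoeff 𝕜 c e u)⁻¹‖)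
    linarith [norm_inner_sub_inv_alignCoeff_sq_mul_le_const he hf hvu hδ hc hc150]
  calc ‖orthPart 𝕜 e u‖ ^ 2 * ‖⟪f, v⟫_𝕜 - (alignCoeff 𝕜 c e u)⁻¹‖ ^ 2
      ≤ 225 / 49 * ‖u ⊗ₜ[𝕜] v - e ⊗ₜ f‖ ^ 2 * (14 / 13 * (11 / 2000)) := by
        gcongr
        exact norm_orthPart_dominating_sq_le he hf hu hδ
    _ ≤ ‖u ⊗ₜ[𝕜] v - e ⊗ₜ f‖ ^ 2 / 36 := by linarith [sq_nonneg ‖u ⊗ₜ[𝕜] v - e ⊗ₜ f‖]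

theorem norm_sub_alignCoeff_smul_sq_mul_le (he : ‖e‖ = 1) (hf : ‖f‖ = 1) (hu : ‖u‖ ≤ 2)
    (hvu : ‖v‖ ≤ ‖u‖) (hδ : ‖u ⊗ₜ[𝕜] v - e ⊗ₜ f‖ ≤ 1 / 15) {c : ℝ} (hc : 0 ≤ c)
    (hc150 : c ≤ 1 / 150) :
    ‖u - alignCoeff 𝕜 c e u • e‖ ^ 2 * ‖v - (alignCoeff 𝕜 c e u)⁻¹ • f‖ ^ 2 ≤
      (‖u ⊗ₜ[𝕜] v - e ⊗ₜ f‖ ^ 2 + c ^ 2) / 26 := by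
  have hshrink_coeff :
      c ^ 2 * (‖⟪f, v⟫_𝕜 - (alignCoeff 𝕜 c e u)⁻¹‖ ^ 2 * ‖⟪e, u⟫_𝕜‖ ^ 2) ≤ c ^ 2 * (11 / 2000) := by
    gcongr
    exact norm_inner_sub_inv_alignCoeff_sq_mul_le_const he hf hvu hδ hc hc150
  have hshrink_orth : c ^ 2 * (‖⟪e, u⟫_𝕜‖ ^ 2 * ‖orthPart 𝕜 f v‖ ^ 2) ≤ c ^ 2 * (1 / 15) ^ 2 := by
    gcongr
    calc ‖⟪e, u⟫_𝕜‖ ^ 2 * ‖orthPart 𝕜 f v‖ ^ 2 ≤ ‖u‖ ^ 2 * ‖orthPart 𝕜 f v‖ ^ 2 := by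
          gcongr
          exact norm_inner_le_of_norm_eq_one he u
      _ ≤ ‖u ⊗ₜ[𝕜] v - e ⊗ₜ f‖ ^ 2 := norm_sq_mul_norm_orthPart_sq_le he hf u v
      _ ≤ (1 / 15) ^ 2 := by gcongr
  rw [norm_sub_alignCoeff_smul_sq he, norm_sub_smul_sq hf]
  linarith [norm_orthPart_sq_mul_norm_inner_sub_inv_alignCoeff_sq_le he hf hu hvu hδ hc hc150,
    norm_orthPart_sq_mul_norm_orthPart_sq_le (𝕜 := 𝕜) he hf hδ, sq_nonneg c,
    sq_nonneg ‖u ⊗ₜ[𝕜] v - e ⊗ₜ f‖]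

theorem norm_alignCoeff_le_two (he : ‖e‖ = 1) (hu : ‖u‖ ≤ 2) {c : ℝ} (hc : 0 ≤ c) (hc1 : c ≤ 1) :
    ‖alignCoeff 𝕜 c e u‖ ≤ 2 := by
  rw [norm_alignCoeff hc1]
  calc (1 - c) * ‖⟪e, u⟫_𝕜‖ ≤ ‖⟪e, u⟫_𝕜‖ := mul_le_of_le_one_left (norm_nonneg _) (by linarith)
    _ ≤ ‖u‖ := norm_inner_le_of_norm_eq_one he u
    _ ≤ 2 := hu

theorem norm_inv_alignCoeff_le_two (he : ‖e‖ = 1) (hf : ‖f‖ = 1) (hvu : ‖v‖ ≤ ‖u‖)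
    (hδ : ‖u ⊗ₜ[𝕜] v - e ⊗ₜ f‖ ≤ 1 / 15) {c : ℝ} (hc150 : c ≤ 1 / 150) :
    ‖(alignCoeff 𝕜 c e u)⁻¹‖ ≤ 2 := by
  have hinner : 9 / 10 ≤ ‖⟪e, u⟫_𝕜‖ :=
    le_of_sq_le_sq (by linarith [norm_inner_sq_ge (𝕜 := 𝕜) he hf hvu hδ]) (norm_nonneg _)
  rw [norm_inv, norm_alignCoeff (by linarith)]
  refine inv_le_of_inv_le₀ (by norm_num) ?_
  calc (2 : ℝ)⁻¹ ≤ 149 / 150 * (9 / 10) := by norm_num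
    _ ≤ (1 - c) * ‖⟪e, u⟫_𝕜‖ := by
        gcongr
        · linarith
        · linarith

end DominatingFactor

theorem norm_tmul_sub_tmul_comm (e u : E) (f v : F) :
    ‖v ⊗ₜ[𝕜] u - f ⊗ₜ e‖ = ‖u ⊗ₜ[𝕜] v - e ⊗ₜ f‖ := by
  rw [← TensorProduct.norm_comm, map_sub, TensorProduct.comm_tmul, TensorProduct.comm_tmul]

variable (𝕜) in
/-- The scalar `α` for which `u` is compared to `α • e` and `v` to `α⁻¹ • f`. It is read off the
longer of the two factors, whose coefficient along its reference vector stays away from `0`. -/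
def balancedCoeff (c : ℝ) (e u : E) (f v : F) : 𝕜 :=
  if ‖v‖ ≤ ‖u‖ then alignCoeff 𝕜 c e u else (alignCoeff 𝕜 c f v)⁻¹

section BalancedCoeff

variable {e u : E} {f v : F} {c : ℝ}

theorem norm_balancedCoeff_le_two (he : ‖e‖ = 1) (hf : ‖f‖ = 1) (hu : ‖u‖ ≤ 2)
    (hδ : ‖u ⊗ₜ[𝕜] v - e ⊗ₜ f‖ ≤ 1 / 15) (hc : 0 ≤ c) (hc150 : c ≤ 1 / 150) :
    ‖balancedCoeff 𝕜 c e u f v‖ ≤ 2 := by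
  rw [balancedCoeff]
  split_ifs with hvu
  · exact norm_alignCoeff_le_two he hu hc (by linarith)
  · rw [← norm_tmul_sub_tmul_comm] at hδ
    exact norm_inv_alignCoeff_le_two hf he (le_of_not_ge hvu) hδ hc150

theorem norm_sub_balancedCoeff_smul_sq_le (he : ‖e‖ = 1) (hf : ‖f‖ = 1) (hu : ‖u‖ ≤ 2)
    (hδ : ‖u ⊗ₜ[𝕜] v - e ⊗ₜ f‖ ≤ 1 / 15) (hc : 0 ≤ c) (hc150 : c ≤ 1 / 150) :
    ‖u - balancedCoeff 𝕜 c e u f v • e‖ ^ 2 ≤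
      7.5 * ‖u ⊗ₜ[𝕜] v - e ⊗ₜ f‖ ^ 2 + 4 * c ^ 2 := by
  rw [balancedCoeff]
  split_ifs with hvu
  · exact norm_sub_alignCoeff_smul_sq_le he hf hu hδ c
  · rw [← norm_tmul_sub_tmul_comm] at hδ ⊢
    exact norm_sub_inv_alignCoeff_smul_sq_le hf he (le_of_not_ge hvu) hδ hc hc150

theorem norm_sub_inv_balancedCoeff_smul_sq_le (he : ‖e‖ = 1) (hf : ‖f‖ = 1) (hv : ‖v‖ ≤ 2)
    (hδ : ‖u ⊗ₜ[𝕜] v - e ⊗ₜ f‖ ≤ 1 / 15) (hc : 0 ≤ c) (hc150 : c ≤ 1 / 150) :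
    ‖v - (balancedCoeff 𝕜 c e u f v)⁻¹ • f‖ ^ 2 ≤
      7.5 * ‖u ⊗ₜ[𝕜] v - e ⊗ₜ f‖ ^ 2 + 4 * c ^ 2 := by
  rw [balancedCoeff]
  split_ifs with hvu
  · exact norm_sub_inv_alignCoeff_smul_sq_le he hf hvu hδ hc hc150
  · rw [← norm_tmul_sub_tmul_comm] at hδ ⊢
    rw [inv_inv]
    exact norm_sub_alignCoeff_smul_sq_le hf he hv hδ c

theorem norm_sub_balancedCoeff_smul_sq_mul_le (he : ‖e‖ = 1) (hf : ‖f‖ = 1) (hu : ‖u‖ ≤ 2)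
    (hv : ‖v‖ ≤ 2) (hδ : ‖u ⊗ₜ[𝕜] v - e ⊗ₜ f‖ ≤ 1 / 15) (hc : 0 ≤ c) (hc150 : c ≤ 1 / 150) :
    ‖u - balancedCoeff 𝕜 c e u f v • e‖ ^ 2 * ‖v - (balancedCoeff 𝕜 c e u f v)⁻¹ • f‖ ^ 2 ≤
      (‖u ⊗ₜ[𝕜] v - e ⊗ₜ f‖ ^ 2 + c ^ 2) / 26 := by
  rw [balancedCoeff]
  split_ifs with hvu
  · exact norm_sub_alignCoeff_smul_sq_mul_le he hf hu hvu hδ hc hc150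
  · rw [← norm_tmul_sub_tmul_comm] at hδ ⊢
    rw [inv_inv, mul_comm]
    exact norm_sub_alignCoeff_smul_sq_mul_le hf he hv (le_of_not_ge hvu) hδ hc hc150

end BalancedCoeff

end TensorPerturbation

section Rescale

open scoped TensorProduct InnerProductSpace

variable {n K N : ℕ} {d : ℝ}

/-- The Euclidean vector `v / √d`, so that a reference vector of norm `√d` becomes a unit vector. -/
def rescale (d : ℝ) (v : Fin n → ℂ) : EuclideanSpace ℂ (Fin n) :=
  WithLp.toLp 2 fun k => v k / (√d : ℂ)

theorem rescale_apply (v : Fin n → ℂ) (k : Fin n) : rescale d v k = v k / (√d : ℂ) := rfl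

theorem rescale_sub_smul (d : ℝ) (u u₀ : Fin n → ℂ) (t : ℂ) :
    rescale d (fun k => u k - t * u₀ k) = rescale d u - t • rescale d u₀ := by
  ext k
  simp only [rescale_apply, PiLp.sub_apply, PiLp.smul_apply, smul_eq_mul]
  ring

theorem inner_rescale (hd : 0 ≤ d) (u v : Fin n → ℂ) :
    ⟪rescale d u, rescale d v⟫_ℂ = vinner u v / d := by
  have hsq : (√d : ℂ) * √d = d := mod_cast Real.mul_self_sqrt hd
  simp only [PiLp.inner_apply, rescale_apply, RCLike.inner_apply, map_div₀, Complex.conj_ofReal,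
    vinner, sum_div, ← hsq]
  exact sum_congr rfl fun k _ => by ring

theorem norm_rescale_sq (hd : 0 ≤ d) (v : Fin n → ℂ) : ‖rescale d v‖ ^ 2 = vnormSq v / d := by
  simp only [EuclideanSpace.norm_sq_eq, rescale_apply, norm_div, Complex.norm_real, div_pow,
    Real.norm_eq_abs, sq_abs, Real.sq_sqrt hd, vnormSq, sum_div]

theorem norm_rescale (hd : 0 ≤ d) (v : Fin n → ℂ) : ‖rescale d v‖ = vnorm v / √d := by
  rw [← Real.sqrt_sq (norm_nonneg _), norm_rescale_sq hd, Real.sqrt_div' _ hd, vnorm]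

theorem vnormSq_star (v : Fin n → ℂ) : vnormSq (star v) = vnormSq v := by
  simp only [vnormSq, Pi.star_apply, norm_star]

theorem vnorm_star (v : Fin n → ℂ) : vnorm (star v) = vnorm v := by
  rw [vnorm, vnormSq_star, vnorm]

theorem vinner_star (u v : Fin n → ℂ) : vinner (star u) (star v) = conj (vinner u v) := by
  simp only [vinner, map_sum, map_mul, Pi.star_apply, RCLike.star_def]

/-- Conjugating the second factor identifies `h x*` with the tensor `h ⊗ x̄`, bilinear in its two
factors. -/
theorem deltaI_eq_norm_tmul_sub_tmul (hd : 0 ≤ d) (h h₀ : Fin K → ℂ) (x x₀ : Fin N → ℂ) :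
    deltaI h₀ x₀ d h x =
      ‖rescale d h ⊗ₜ[ℂ] rescale d (star x) - rescale d h₀ ⊗ₜ rescale d (star x₀)‖ := by
  set z := rescale d h ⊗ₜ[ℂ] rescale d (star x) - rescale d h₀ ⊗ₜ rescale d (star x₀)
  set basis := (EuclideanSpace.basisFun (Fin K) ℂ).tensorProduct
    (EuclideanSpace.basisFun (Fin N) ℂ)
  have hsq : (√d : ℂ) * √d = d := mod_cast Real.mul_self_sqrt hd
  have hcoord (p : Fin K × Fin N) :
      basis.repr z p = (rankOne h x - rankOne h₀ x₀) p.1 p.2 / d := by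
    simp only [basis, z, map_sub, PiLp.sub_apply, OrthonormalBasis.tensorProduct_repr_tmul_apply',
      EuclideanSpace.basisFun_repr, rescale_apply, Pi.star_apply, RCLike.star_def, rankOne,
      Matrix.sub_apply, Matrix.of_apply, ← hsq]
    ring
  have hsum : ‖z‖ ^ 2 = frobSq (rankOne h x - rankOne h₀ x₀) / d ^ 2 := by
    simp only [← basis.repr.norm_map z, EuclideanSpace.norm_sq_eq, hcoord, norm_div, div_pow,
      Complex.norm_real, Real.norm_eq_abs, sq_abs, ← sum_div, Fintype.sum_prod_type, frobSq]
  rw [deltaI, frob, ← Real.sqrt_sq (norm_nonneg z), hsum, Real.sqrt_div' _ (sq_nonneg d),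
    Real.sqrt_sq hd]

theorem norm_rescale_eq_one (hd : 0 < d) {v : Fin n → ℂ} (hv : vnorm v = √d) :
    ‖rescale d v‖ = 1 := by
  rw [norm_rescale hd.le, hv, div_self (Real.sqrt_pos.mpr hd).ne']

theorem norm_rescale_le_two (hd : 0 < d) {v : Fin n → ℂ} (hv : vnorm v ≤ 2 * √d) :
    ‖rescale d v‖ ≤ 2 := by
  rwa [norm_rescale hd.le, div_le_iff₀ (Real.sqrt_pos.mpr hd)]

theorem vinner_sub_smul (b u u₀ : Fin n → ℂ) (t : ℂ) :
    vinner b (fun k => u k - t * u₀ k) = vinner b u - t * vinner b u₀ := by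
  simp only [vinner, mul_sum, ← sum_sub_distrib]
  exact sum_congr rfl fun _ _ => by ring

end Rescale

section Blocks

variable {K N s : ℕ} {h0 : Fin s → Fin K → ℂ} {x0 : Fin s → Fin N → ℂ} {d0 : Fin s → ℝ}
  {h : Fin s → Fin K → ℂ} {x : Fin s → Fin N → ℂ}

theorem delta0_nonneg : 0 ≤ delta0 h0 x0 d0 h x :=
  div_nonneg (div_nonneg (Real.sqrt_nonneg _) (Real.sqrt_nonneg _)) (by norm_num)

theorem frobSq_nonneg (Z : Matrix (Fin K) (Fin N) ℂ) : 0 ≤ frobSq Z :=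
  sum_nonneg fun _ _ => sum_nonneg fun _ _ => sq_nonneg _

theorem frobSq_rankOne_sub_le {d ε : ℝ} (hd : 0 < d) {h h₀ : Fin K → ℂ} {x x₀ : Fin N → ℂ}
    (hδ : deltaI h₀ x₀ d h x ≤ ε) :
    frobSq (rankOne h x - rankOne h₀ x₀) ≤ ε ^ 2 * d ^ 2 := by
  rw [deltaI, div_le_iff₀ hd] at hδ
  rw [← Real.sq_sqrt (frobSq_nonneg _), ← mul_pow]
  exact pow_le_pow_left₀ (Real.sqrt_nonneg _) hδ 2

theorem deltaTot_le {ε : ℝ} (hε : 0 ≤ ε) (hd0 : ∀ i, 0 < d0 i) (hNε : inNeps h0 x0 d0 ε h x) :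
    deltaTot h0 x0 d0 h x ≤ ε := by
  refine div_le_of_le_mul₀ (Real.sqrt_nonneg _) hε
    (Real.sqrt_le_iff.mpr ⟨mul_nonneg hε (Real.sqrt_nonneg _), ?_⟩)
  rw [mul_pow, dtot, Real.sq_sqrt (sum_nonneg fun _ _ => sq_nonneg _), mul_sum]
  exact sum_le_sum fun i _ => frobSq_rankOne_sub_le (hd0 i) (hNε i)

theorem delta0_le {ε : ℝ} (hε : 0 ≤ ε) (hd0 : ∀ i, 0 < d0 i) (hNε : inNeps h0 x0 d0 ε h x) :
    delta0 h0 x0 d0 h x ≤ ε / 10 :=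
  div_le_div_of_nonneg_right (deltaTot_le hε hd0 hNε) (by norm_num)

theorem alphaC_eq_balancedCoeff {i : Fin s} (hd : 0 < d0 i) :
    alphaC h0 x0 d0 h x i =
      balancedCoeff ℂ (delta0 h0 x0 d0 h x) (rescale (d0 i) (h0 i)) (rescale (d0 i) (h i))
        (rescale (d0 i) (star (x0 i))) (rescale (d0 i) (star (x i))) := by
  have horder : ‖rescale (d0 i) (star (x i))‖ ≤ ‖rescale (d0 i) (h i)‖ ↔
      vnorm (x i) ≤ vnorm (h i) := by
    rw [norm_rescale hd.le, norm_rescale hd.le, vnorm_star,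
      div_le_div_iff_of_pos_right (Real.sqrt_pos.mpr hd)]
  simp only [alphaC, balancedCoeff, alignCoeff, horder, inner_rescale hd.le, vinner_star, alpha1,
    alpha2, map_div₀, Complex.conj_ofReal, one_div, Complex.ofReal_sub, Complex.ofReal_one]
  rfl

theorem vnormSq_dh {i : Fin s} (hd : 0 < d0 i) :
    vnormSq (dh h0 x0 d0 h x i) =
      ‖rescale (d0 i) (h i) - alphaC h0 x0 d0 h x i • rescale (d0 i) (h0 i)‖ ^ 2 * d0 i := by
  rw [← rescale_sub_smul, norm_rescale_sq hd.le, div_mul_cancel₀ _ hd.ne']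
  rfl

theorem vnormSq_dx {i : Fin s} (hd : 0 < d0 i) :
    vnormSq (dx h0 x0 d0 h x i) =
      ‖rescale (d0 i) (star (x i)) -
        (alphaC h0 x0 d0 h x i)⁻¹ • rescale (d0 i) (star (x0 i))‖ ^ 2 * d0 i := by
  have hstar : star (dx h0 x0 d0 h x i) =
      fun j => star (x i) j - (alphaC h0 x0 d0 h x i)⁻¹ * star (x0 i) j := by
    ext j
    simp [dx]
  rw [← rescale_sub_smul, norm_rescale_sq hd.le, div_mul_cancel₀ _ hd.ne', ← hstar, vnormSq_star]

theorem norm_alphaC_le_two {i : Fin s} (hd : 0 < d0 i) (hh0 : vnorm (h0 i) = √(d0 i))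
    (hx0 : vnorm (x0 i) = √(d0 i)) (hh : vnorm (h i) ≤ 2 * √(d0 i))
    (hδ : deltaI (h0 i) (x0 i) (d0 i) (h i) (x i) ≤ 1 / 15)
    (hδ0 : delta0 h0 x0 d0 h x ≤ 1 / 150) : ‖alphaC h0 x0 d0 h x i‖ ≤ 2 := by
  rw [alphaC_eq_balancedCoeff hd]
  rw [deltaI_eq_norm_tmul_sub_tmul hd.le] at hδ
  exact norm_balancedCoeff_le_two (norm_rescale_eq_one hd hh0)
    (norm_rescale_eq_one hd ((vnorm_star _).trans hx0)) (norm_rescale_le_two hd hh) hδ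
    delta0_nonneg hδ0

theorem vnormSq_dh_le {i : Fin s} (hd : 0 < d0 i) (hh0 : vnorm (h0 i) = √(d0 i))
    (hx0 : vnorm (x0 i) = √(d0 i)) (hh : vnorm (h i) ≤ 2 * √(d0 i))
    (hδ : deltaI (h0 i) (x0 i) (d0 i) (h i) (x i) ≤ 1 / 15)
    (hδ0 : delta0 h0 x0 d0 h x ≤ 1 / 150) :
    vnormSq (dh h0 x0 d0 h x i) ≤
      (7.5 * deltaI (h0 i) (x0 i) (d0 i) (h i) (x i) ^ 2 + 4 * delta0 h0 x0 d0 h x ^ 2) *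
        d0 i := by
  rw [vnormSq_dh hd, alphaC_eq_balancedCoeff hd]
  rw [deltaI_eq_norm_tmul_sub_tmul hd.le] at hδ ⊢
  gcongr
  exact norm_sub_balancedCoeff_smul_sq_le (norm_rescale_eq_one hd hh0)
    (norm_rescale_eq_one hd ((vnorm_star _).trans hx0)) (norm_rescale_le_two hd hh) hδ
    delta0_nonneg hδ0

theorem vnormSq_dx_le {i : Fin s} (hd : 0 < d0 i) (hh0 : vnorm (h0 i) = √(d0 i))
    (hx0 : vnorm (x0 i) = √(d0 i)) (hx : vnorm (x i) ≤ 2 * √(d0 i))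
    (hδ : deltaI (h0 i) (x0 i) (d0 i) (h i) (x i) ≤ 1 / 15)
    (hδ0 : delta0 h0 x0 d0 h x ≤ 1 / 150) :
    vnormSq (dx h0 x0 d0 h x i) ≤
      (7.5 * deltaI (h0 i) (x0 i) (d0 i) (h i) (x i) ^ 2 + 4 * delta0 h0 x0 d0 h x ^ 2) *
        d0 i := by
  rw [vnormSq_dx hd, alphaC_eq_balancedCoeff hd]
  rw [deltaI_eq_norm_tmul_sub_tmul hd.le] at hδ ⊢
  gcongr
  exact norm_sub_inv_balancedCoeff_smul_sq_le (norm_rescale_eq_one hd hh0)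
    (norm_rescale_eq_one hd ((vnorm_star _).trans hx0))
    (norm_rescale_le_two hd ((vnorm_star _).trans_le hx)) hδ delta0_nonneg hδ0

theorem vnormSq_dh_mul_vnormSq_dx_le {i : Fin s} (hd : 0 < d0 i) (hh0 : vnorm (h0 i) = √(d0 i))
    (hx0 : vnorm (x0 i) = √(d0 i)) (hh : vnorm (h i) ≤ 2 * √(d0 i))
    (hx : vnorm (x i) ≤ 2 * √(d0 i)) (hδ : deltaI (h0 i) (x0 i) (d0 i) (h i) (x i) ≤ 1 / 15)
    (hδ0 : delta0 h0 x0 d0 h x ≤ 1 / 150) :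
    vnormSq (dh h0 x0 d0 h x i) * vnormSq (dx h0 x0 d0 h x i) ≤
      (deltaI (h0 i) (x0 i) (d0 i) (h i) (x i) ^ 2 + delta0 h0 x0 d0 h x ^ 2) * d0 i ^ 2 / 26 := by
  rw [vnormSq_dh hd, vnormSq_dx hd, mul_mul_mul_comm, ← sq, mul_div_right_comm,
    alphaC_eq_balancedCoeff hd]
  rw [deltaI_eq_norm_tmul_sub_tmul hd.le] at hδ ⊢
  gcongr
  exact norm_sub_balancedCoeff_smul_sq_mul_le (norm_rescale_eq_one hd hh0)
    (norm_rescale_eq_one hd ((vnorm_star _).trans hx0)) (norm_rescale_le_two hd hh)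
    (norm_rescale_le_two hd ((vnorm_star _).trans_le hx)) hδ delta0_nonneg hδ0

theorem sqrt_mul_norm_vinner_dh_le {L : ℕ} {b : Fin L → Fin K → ℂ} {μ : ℝ} {i : Fin s}
    (hh0 : vnorm (h0 i) = √(d0 i)) (hα : ‖alphaC h0 x0 d0 h x i‖ ≤ 2) (hh : inNmu b d0 μ h)
    (hμh : muhLe b h0 μ) (l : Fin L) :
    √L * ‖vinner (b l) (dh h0 x0 d0 h x i)‖ ≤ 6 * μ * √(d0 i) := by
  calc √L * ‖vinner (b l) (dh h0 x0 d0 h x i)‖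
      = √L * ‖vinner (b l) (h i) - alphaC h0 x0 d0 h x i * vinner (b l) (h0 i)‖ := by
        unfold dh
        rw [vinner_sub_smul]
    _ ≤ √L * (‖vinner (b l) (h i)‖ + 2 * ‖vinner (b l) (h0 i)‖) := by
        gcongr
        refine (norm_sub_le _ _).trans ?_
        rw [norm_mul]
        gcongr
    _ = √L * ‖vinner (b l) (h i)‖ + 2 * (√L * ‖vinner (b l) (h0 i)‖) := by ring
    _ ≤ 4 * √(d0 i) * μ + 2 * (μ * √(d0 i)) :=
        add_le_add (hh i l) (mul_le_mul_of_nonneg_left (hh0 ▸ hμh i l) zero_le_two)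
    _ = 6 * μ * √(d0 i) := by ring

end Blocks

/-- bounds on `Δhᵢ` and `Δxᵢ`. -/
theorem statement11
    {K N L s : ℕ} (hK : 0 < K) (hN : 0 < N) (hL : 0 < L) (hs : 0 < s)
    (b : Fin L → Fin K → ℂ)
    (h0 : Fin s → Fin K → ℂ) (x0 : Fin s → Fin N → ℂ)
    (d0 : Fin s → ℝ) (hd0 : ∀ i, 0 < d0 i)
    (hh0 : ∀ i, vnorm (h0 i) = Real.sqrt (d0 i))
    (hx0 : ∀ i, vnorm (x0 i) = Real.sqrt (d0 i))
    (μ ε : ℝ) (hμ : 0 < μ) (hε : 0 < ε) (hε15 : ε ≤ 1 / 15)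
    (h : Fin s → Fin K → ℂ) (x : Fin s → Fin N → ℂ)
    (hNd : inNd d0 h x) (hNε : inNeps h0 x0 d0 ε h x) :
    (∀ i,
      max (vnormSq (dh h0 x0 d0 h x i)) (vnormSq (dx h0 x0 d0 h x i))
          ≤ (7.5 * deltaI (h0 i) (x0 i) (d0 i) (h i) (x i) ^ 2
              + 4 * delta0 h0 x0 d0 h x ^ 2) * d0 i
      ∧ vnormSq (dh h0 x0 d0 h x i) * vnormSq (dx h0 x0 d0 h x i)
          ≤ (deltaI (h0 i) (x0 i) (d0 i) (h i) (x i) ^ 2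
              + delta0 h0 x0 d0 h x ^ 2) * d0 i ^ 2 / 26)
    ∧ (inNmu b d0 μ h → muhLe b h0 μ →
        ∀ i l, Real.sqrt L * ‖vinner (b l) (dh h0 x0 d0 h x i)‖
          ≤ 6 * μ * Real.sqrt (d0 i)) := by
  have hδ i : deltaI (h0 i) (x0 i) (d0 i) (h i) (x i) ≤ 1 / 15 := (hNε i).trans hε15
  have hδ0 : delta0 h0 x0 d0 h x ≤ 1 / 150 := by linarith [delta0_le hε.le hd0 hNε]
  refine ⟨fun i => ⟨max_le ?_ ?_, ?_⟩, fun hNμ hμh i l => ?_⟩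
  · exact vnormSq_dh_le (hd0 i) (hh0 i) (hx0 i) (hNd i).1 (hδ i) hδ0
  · exact vnormSq_dx_le (hd0 i) (hh0 i) (hx0 i) (hNd i).2 (hδ i) hδ0
  · exact vnormSq_dh_mul_vnormSq_dx_le (hd0 i) (hh0 i) (hx0 i) (hNd i).1 (hNd i).2 (hδ i) hδ0
  · exact sqrt_mul_norm_vinner_dh_le (hh0 i)
      (norm_alphaC_le_two (hd0 i) (hh0 i) (hx0 i) (hNd i).1 (hδ i) hδ0) hNμ hμh l

end RGD
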